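/- Suppose n_B = dim B ≥ 1. Then there exists μ̃ > 0 such that for every 0 < μ < μ̃ one has λ_{[n_B]}(X^μ) > λ_{[n_B+1]}(X^μ), so the span R_B^μ of eigenvectors corresponding to the n_B largest eigenvalues of X^μ is well defined, and dist(R_B^μ, B) → 0 as μ → 0+. Analogously, if n_N = dim N ≥ 1, then for all sufficiently small μ > 0 the span R_N^μ of eigenvectors corresponding to the n_N largest eigenvalues of S^μ is well defined and dist(R_N^μ, N) → 0 as μ → 0+. -/

import Mathlib

open Matrix Set

noncomputable section

variable {n m : ℕ}

/-- Feasibility for the primal SDO problem `(P_ε)` (the feasible set does not depend on `ε`). -/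
def PrimalFeasible (A : Fin m → Matrix (Fin n) (Fin n) ℝ) (b : Fin m → ℝ)
    (X : Matrix (Fin n) (Fin n) ℝ) : Prop :=
  X.IsSymm ∧ (∀ i, ((A i) * X).trace = b i) ∧ X.PosSemidef

/-- Feasibility for the dual SDO problem `(D_ε)`. -/
def DualFeasible (C Cbar : Matrix (Fin n) (Fin n) ℝ)
    (A : Fin m → Matrix (Fin n) (Fin n) ℝ) (ε : ℝ)
    (y : Fin m → ℝ) (S : Matrix (Fin n) (Fin n) ℝ) : Prop :=
  S.IsSymm ∧ (∑ i, y i • A i) + S = C + ε • Cbar ∧ S.PosSemidef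

/-- The optimal value function `v(ε)` of `(P_ε)`, with values in `EReal`. -/
def vfun (C Cbar : Matrix (Fin n) (Fin n) ℝ) (A : Fin m → Matrix (Fin n) (Fin n) ℝ)
    (b : Fin m → ℝ) (ε : ℝ) : EReal :=
  sInf ((fun X => (((C + ε • Cbar) * X).trace : EReal)) '' {X | PrimalFeasible A b X})

/-- `E = {ε : v(ε) > -∞}`. -/
def Eset (C Cbar : Matrix (Fin n) (Fin n) ℝ) (A : Fin m → Matrix (Fin n) (Fin n) ℝ)
    (b : Fin m → ℝ) : Set ℝ :=
  {ε | ⊥ < vfun C Cbar A b ε}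

/-- The primal optimal set `P*(ε)`. -/
def PrimalOpt (C Cbar : Matrix (Fin n) (Fin n) ℝ) (A : Fin m → Matrix (Fin n) (Fin n) ℝ)
    (b : Fin m → ℝ) (ε : ℝ) : Set (Matrix (Fin n) (Fin n) ℝ) :=
  {X | PrimalFeasible A b X ∧ ∀ X', PrimalFeasible A b X' →
    ((C + ε • Cbar) * X).trace ≤ ((C + ε • Cbar) * X').trace}

/-- The dual optimal set `D*(ε)`. -/
def DualOpt (C Cbar : Matrix (Fin n) (Fin n) ℝ) (A : Fin m → Matrix (Fin n) (Fin n) ℝ)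
    (b : Fin m → ℝ) (ε : ℝ) : Set ((Fin m → ℝ) × Matrix (Fin n) (Fin n) ℝ) :=
  {p | DualFeasible C Cbar A ε p.1 p.2 ∧ ∀ y' S', DualFeasible C Cbar A ε y' S' →
    ∑ i, b i * y' i ≤ ∑ i, b i * p.1 i}

/-- A maximally complementary optimal solution: `X` lies in the relative interior of `P*(ε)`
and `(y, S)` in the relative interior of `D*(ε)`. -/
def MaxComp (C Cbar : Matrix (Fin n) (Fin n) ℝ) (A : Fin m → Matrix (Fin n) (Fin n) ℝ)
    (b : Fin m → ℝ) (ε : ℝ) (X : Matrix (Fin n) (Fin n) ℝ) (y : Fin m → ℝ)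
    (S : Matrix (Fin n) (Fin n) ℝ) : Prop :=
  X ∈ intrinsicInterior ℝ (PrimalOpt C Cbar A b ε) ∧
    (y, S) ∈ intrinsicInterior ℝ (DualOpt C Cbar A b ε)

/-- `π(ε) = π(ε')`: the optimal partitions at `ε` and `ε'` coincide, expressed through
maximally complementary solutions (`B = range X*`, `N = range S*`, `T` being determined
by `B` and `N`). -/
def SamePartition (C Cbar : Matrix (Fin n) (Fin n) ℝ) (A : Fin m → Matrix (Fin n) (Fin n) ℝ)
    (b : Fin m → ℝ) (ε ε' : ℝ) : Prop :=
  ∃ X y S X' y' S', MaxComp C Cbar A b ε X y S ∧ MaxComp C Cbar A b ε' X' y' S' ∧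
    LinearMap.range X.mulVecLin = LinearMap.range X'.mulVecLin ∧
    LinearMap.range S.mulVecLin = LinearMap.range S'.mulVecLin

/-- The standing assumptions: symmetric data, linearly independent constraint matrices and
the interior point condition at `ε = 0`. -/
def StandingAssumptions (C Cbar : Matrix (Fin n) (Fin n) ℝ)
    (A : Fin m → Matrix (Fin n) (Fin n) ℝ) (b : Fin m → ℝ) : Prop :=
  C.IsSymm ∧ Cbar.IsSymm ∧ (∀ i, (A i).IsSymm) ∧ LinearIndependent ℝ A ∧
    ∃ X y S, PrimalFeasible A b X ∧ X.PosDef ∧ DualFeasible C Cbar A 0 y S ∧ S.PosDef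

/-- The invariancy set of `ε̄`. -/
def InvSet (C Cbar : Matrix (Fin n) (Fin n) ℝ) (A : Fin m → Matrix (Fin n) (Fin n) ℝ)
    (b : Fin m → ℝ) (εbar : ℝ) : Set ℝ :=
  {ε | ε ∈ interior (Eset C Cbar A b) ∧ SamePartition C Cbar A b ε εbar}

/-- `dim B(ε) = dim B(ε')` and `dim N(ε) = dim N(ε')`, expressed through maximally
complementary solutions. -/
def DimsMatch (C Cbar : Matrix (Fin n) (Fin n) ℝ) (A : Fin m → Matrix (Fin n) (Fin n) ℝ)
    (b : Fin m → ℝ) (ε ε' : ℝ) : Prop :=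
  ∀ X y S X' y' S', MaxComp C Cbar A b ε X y S → MaxComp C Cbar A b ε' X' y' S' →
    Module.finrank ℝ (LinearMap.range X.mulVecLin) =
        Module.finrank ℝ (LinearMap.range X'.mulVecLin) ∧
      Module.finrank ℝ (LinearMap.range S.mulVecLin) =
        Module.finrank ℝ (LinearMap.range S'.mulVecLin)

/-- A transition point: a singleton invariancy set such that every neighborhood contains a
parameter at which `dim B` or `dim N` differs. -/
def IsTransitionPoint (C Cbar : Matrix (Fin n) (Fin n) ℝ) (A : Fin m → Matrix (Fin n) (Fin n) ℝ)
    (b : Fin m → ℝ) (εbar : ℝ) : Prop :=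
  εbar ∈ interior (Eset C Cbar A b) ∧
    (∀ ε ∈ interior (Eset C Cbar A b), ε ≠ εbar → ¬ SamePartition C Cbar A b ε εbar) ∧
    ∀ ξ : ℝ, 0 < ξ → ∃ ε ∈ Set.Ioo (εbar - ξ) (εbar + ξ) ∩ interior (Eset C Cbar A b),
      ¬ DimsMatch C Cbar A b ε εbar

/-- Existence of a strictly complementary optimal solution at `ε`. -/
def HasStrictComp (C Cbar : Matrix (Fin n) (Fin n) ℝ) (A : Fin m → Matrix (Fin n) (Fin n) ℝ)
    (b : Fin m → ℝ) (ε : ℝ) : Prop :=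
  ∃ X y S, X ∈ PrimalOpt C Cbar A b ε ∧ (y, S) ∈ DualOpt C Cbar A b ε ∧ (X + S).PosDef

/-- Nonsingularity of the Jacobian `J(X, y, S)` of the optimality system, as a linear map on
`S^n × ℝ^m × S^n`: only the trivial symmetric triple is mapped to zero. -/
def JNonsingular (A : Fin m → Matrix (Fin n) (Fin n) ℝ)
    (X S : Matrix (Fin n) (Fin n) ℝ) : Prop :=
  ∀ (DX DS : Matrix (Fin n) (Fin n) ℝ) (Dy : Fin m → ℝ), DX.IsSymm → DS.IsSymm →
    (∀ i, ((A i) * DX).trace = 0) → ((∑ i, Dy i • A i) + DS = 0) →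
    (DX * S + S * DX + X * DS + DS * X = 0) → DX = 0 ∧ Dy = 0 ∧ DS = 0

/-- Primal nondegeneracy of a primal feasible `X`. -/
def PrimalNondeg (A : Fin m → Matrix (Fin n) (Fin n) ℝ)
    (X : Matrix (Fin n) (Fin n) ℝ) : Prop :=
  ∃ (r : ℕ) (M₁ : Matrix (Fin n) (Fin r) ℝ) (M₂ : Matrix (Fin n) (Fin (n - r)) ℝ),
    M₁ᵀ * M₁ = 1 ∧ M₂ᵀ * M₂ = 1 ∧ M₁ᵀ * M₂ = 0 ∧
    LinearMap.range M₁.mulVecLin = LinearMap.range X.mulVecLin ∧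
    LinearIndependent ℝ (fun i =>
      Matrix.fromBlocks (M₁ᵀ * (A i) * M₁) (M₁ᵀ * (A i) * M₂) (M₂ᵀ * (A i) * M₁) 0)

/-- Dual nondegeneracy of a dual feasible `(y, S)` (the condition involves only `S`). -/
def DualNondeg (A : Fin m → Matrix (Fin n) (Fin n) ℝ)
    (S : Matrix (Fin n) (Fin n) ℝ) : Prop :=
  ∃ (k : ℕ) (N₁ : Matrix (Fin n) (Fin k) ℝ),
    N₁ᵀ * N₁ = 1 ∧ LinearMap.range N₁.mulVecLin = LinearMap.ker S.mulVecLin ∧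
    ∀ W : Matrix (Fin k) (Fin k) ℝ, W.IsSymm →
      W ∈ Submodule.span ℝ (Set.range fun i => N₁ᵀ * (A i) * N₁)

/-- A central solution with parameter `μ` for the problems `(P_ε)` and `(D_ε)`. -/
def CentralSol (C Cbar : Matrix (Fin n) (Fin n) ℝ) (A : Fin m → Matrix (Fin n) (Fin n) ℝ)
    (b : Fin m → ℝ) (ε μ : ℝ) (X : Matrix (Fin n) (Fin n) ℝ) (y : Fin m → ℝ)
    (S : Matrix (Fin n) (Fin n) ℝ) : Prop :=
  PrimalFeasible A b X ∧ DualFeasible C Cbar A ε y S ∧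
    X * S = μ • (1 : Matrix (Fin n) (Fin n) ℝ)

/-- The Frobenius norm of a matrix. -/
def frobNorm {α β : Type*} [Fintype α] [Fintype β] (M : Matrix α β ℝ) : ℝ :=
  Real.sqrt (∑ i, ∑ j, (M i j) ^ 2)

/-- The spectral norm (induced 2-norm) of a square matrix. -/
def specNorm {N : ℕ} (M : Matrix (Fin N) (Fin N) ℝ) : ℝ :=
  ‖LinearMap.toContinuousLinearMap (Matrix.toEuclideanLin M)‖

/-- The smallest eigenvalue of a symmetric matrix, via the Rayleigh quotient. -/
def lamMin {k : ℕ} (M : Matrix (Fin k) (Fin k) ℝ) : ℝ :=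
  sInf {r : ℝ | ∃ x : Fin k → ℝ, (∑ i, (x i) ^ 2) = 1 ∧ r = x ⬝ᵥ M.mulVec x}

/-- `θ^μ`: the operator norm of the inverse of the Jacobian `J(X, y, S)` on
`S^n × ℝ^m × S^n`, characterized as the least constant `t ≥ 0` with
`‖(ΔX, Δy, ΔS)‖ ≤ t * ‖J(X,y,S)(ΔX, Δy, ΔS)‖` for all symmetric `ΔX`, `ΔS`. -/
def thetaMu (A : Fin m → Matrix (Fin n) (Fin n) ℝ)
    (X S : Matrix (Fin n) (Fin n) ℝ) : ℝ :=
  sInf {t : ℝ | 0 ≤ t ∧ ∀ (DX DS : Matrix (Fin n) (Fin n) ℝ) (Dy : Fin m → ℝ),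
    DX.IsSymm → DS.IsSymm →
    Real.sqrt (frobNorm DX ^ 2 + (∑ i, (Dy i) ^ 2) + frobNorm DS ^ 2) ≤
      t * Real.sqrt ((∑ i, (((A i) * DX).trace) ^ 2) +
        frobNorm ((∑ i, Dy i • A i) + DS) ^ 2 +
        frobNorm ((1 / 2 : ℝ) • (DX * S + S * DX + X * DS + DS * X)) ^ 2)}

/-- A nonlinearity interval: a non-singleton open subinterval of `int(E)`, of maximal length,
on which `dim B(·)` and `dim N(·)` are constant while the optimal partition `π(·)` varies. -/
def IsNonlinearityInterval (C Cbar : Matrix (Fin n) (Fin n) ℝ)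
    (A : Fin m → Matrix (Fin n) (Fin n) ℝ) (b : Fin m → ℝ) (I : Set ℝ) : Prop :=
  I ⊆ interior (Eset C Cbar A b) ∧ IsOpen I ∧ I.OrdConnected ∧
    (∃ a ∈ I, ∃ c ∈ I, a ≠ c) ∧
    (∀ ε ∈ I, ∀ ε' ∈ I, DimsMatch C Cbar A b ε ε') ∧
    ¬ (∀ ε ∈ I, ∀ ε' ∈ I, SamePartition C Cbar A b ε ε') ∧
    ∀ I' : Set ℝ, I ⊆ I' → I' ⊆ interior (Eset C Cbar A b) → IsOpen I' → I'.OrdConnected →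
      (∀ ε ∈ I', ∀ ε' ∈ I', DimsMatch C Cbar A b ε ε') → I' = I

end

section Helpers
open Filter Topology

lemma psd_quad_nonneg {n : ℕ} {M : Matrix (Fin n) (Fin n) ℝ} (hM : M.PosSemidef)
    (v : Fin n → ℝ) : 0 ≤ v ⬝ᵥ M *ᵥ v := by
  simpa using hM.dotProduct_mulVec_nonneg v

lemma psd_symm {n : ℕ} {M : Matrix (Fin n) (Fin n) ℝ} (hM : M.PosSemidef) : Mᵀ = M := by
  have := hM.1
  simpa [Matrix.IsHermitian] using this

lemma symm_swap {n : ℕ} {M : Matrix (Fin n) (Fin n) ℝ} (hM : Mᵀ = M) (v w : Fin n → ℝ) :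
    v ⬝ᵥ M *ᵥ w = w ⬝ᵥ M *ᵥ v := by
  rw [dotProduct_mulVec, ← mulVec_transpose, hM, dotProduct_comm]

/-- Cauchy-Schwarz for positive semidefinite forms. -/
lemma psd_cs {n : ℕ} {M : Matrix (Fin n) (Fin n) ℝ} (hM : M.PosSemidef) (v w : Fin n → ℝ) :
    (v ⬝ᵥ M *ᵥ w) ^ 2 ≤ (v ⬝ᵥ M *ᵥ v) * (w ⬝ᵥ M *ᵥ w) := by
  have h : ∀ t : ℝ, 0 ≤ (w ⬝ᵥ M *ᵥ w) * (t * t) + (2 * (v ⬝ᵥ M *ᵥ w)) * t + v ⬝ᵥ M *ᵥ v := by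
    intro t
    have := psd_quad_nonneg hM (v + t • w)
    simp only [mulVec_add, mulVec_smul, dotProduct_add, add_dotProduct, smul_dotProduct,
      dotProduct_smul, smul_eq_mul] at this
    rw [symm_swap (psd_symm hM) w v] at this
    linarith
  have := discrim_le_zero h
  unfold discrim at this
  nlinarith

lemma trace_vecMulVec_mul' {n : ℕ} (M : Matrix (Fin n) (Fin n) ℝ) (v : Fin n → ℝ) :
    (vecMulVec v v * M).trace = v ⬝ᵥ M *ᵥ v := by
  rw [Matrix.vecMulVec_mul, Matrix.trace_vecMulVec, dotProduct_comm, dotProduct_mulVec, dotProduct_comm,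
    dotProduct_comm]

lemma psd_trace_mul_le {n : ℕ} {Z P R : Matrix (Fin n) (Fin n) ℝ} (hZ : Z.PosSemidef)
    (h : ∀ v, v ⬝ᵥ P *ᵥ v ≤ v ⬝ᵥ R *ᵥ v) : (Z * P).trace ≤ (Z * R).trace := by
  obtain ⟨k, v, rfl⟩ := Matrix.posSemidef_iff_eq_sum_vecMulVec.1 hZ
  simp only [Finset.sum_mul, Matrix.trace_sum, star_trivial, trace_vecMulVec_mul']
  exact Finset.sum_le_sum fun i _ => h _

lemma psd_trace_mul_nonneg {n : ℕ} {Z R : Matrix (Fin n) (Fin n) ℝ} (hZ : Z.PosSemidef)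
    (hR : R.PosSemidef) : 0 ≤ (Z * R).trace := by
  have := psd_trace_mul_le (P := 0) hZ (fun v => by simpa using psd_quad_nonneg hR v)
  simpa using this

lemma key_ineq {n : ℕ} {X S Z : Matrix (Fin n) (Fin n) ℝ} (hX : X.PosSemidef)
    (hS : S.PosSemidef) (hZ : Z.PosSemidef) {μ : ℝ} (hμ : 0 < μ)
    (hXS : X * S = μ • (1 : Matrix (Fin n) (Fin n) ℝ)) (w : Fin n → ℝ) :
    μ * (w ⬝ᵥ Z *ᵥ w) ≤ (w ⬝ᵥ X *ᵥ w) * (Z * S).trace := by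
  have h1 : ∀ v, v ⬝ᵥ (μ • vecMulVec w w) *ᵥ v ≤ v ⬝ᵥ ((w ⬝ᵥ X *ᵥ w) • S) *ᵥ v := by
    intro v
    have := psd_cs hX w (S *ᵥ v)
    rw [mulVec_mulVec, hXS, smul_mulVec, one_mulVec, dotProduct_smul, dotProduct_smul,
      dotProduct_comm (S *ᵥ v) v, smul_eq_mul, smul_eq_mul] at this
    rw [smul_mulVec, smul_mulVec, dotProduct_smul, dotProduct_smul, vecMulVec_mulVec,
      smul_eq_mul, smul_eq_mul]
    have e : v ⬝ᵥ (MulOpposite.op (w ⬝ᵥ v) • w) = (w ⬝ᵥ v) ^ 2 := by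
      rw [dotProduct_smul, dotProduct_comm v w]; simp [sq]
    rw [e]
    have h2 : μ * (μ * (w ⬝ᵥ v) ^ 2) ≤ μ * ((w ⬝ᵥ X *ᵥ w) * (v ⬝ᵥ S *ᵥ v)) := by
      nlinarith
    exact le_of_mul_le_mul_left h2 hμ
  have h2 := psd_trace_mul_le hZ h1
  rw [Matrix.mul_smul, Matrix.mul_smul, trace_smul, trace_smul, Matrix.trace_mul_comm Z,
    trace_vecMulVec_mul'] at h2
  simpa using h2

lemma psd_entry_bound {n : ℕ} {X : Matrix (Fin n) (Fin n) ℝ} (hX : X.PosSemidef) {K : ℝ}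
    (hK : ∀ i, X i i ≤ K) (i j : Fin n) : |X i j| ≤ K := by
  have h := psd_cs hX (Pi.single i 1) (Pi.single j 1)
  simp at h
  have h0 : ∀ i, 0 ≤ X i i := fun i => hX.diag_nonneg
  have hK0 : 0 ≤ K := (h0 i).trans (hK i)
  refine abs_le_of_sq_le_sq ?_ hK0
  calc X i j ^ 2 ≤ X i i * X j j := h
    _ ≤ K * K := mul_le_mul (hK i) (hK j) (h0 j) hK0
    _ = K ^ 2 := by ring

/-- A uniform bound for psd matrices with bounded inner product with a fixed pd matrix. -/
lemma psd_bounded {n : ℕ} {S₀ : Matrix (Fin n) (Fin n) ℝ} (hS : S₀.PosDef) (K : ℝ) :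
    ∃ L : ℝ, ∀ X : Matrix (Fin n) (Fin n) ℝ, X.PosSemidef → (X * S₀).trace ≤ K →
      ∀ i j, |X i j| ≤ L := by
  have hR : (S₀⁻¹).PosSemidef := hS.posSemidef.inv
  refine ⟨∑ i, S₀⁻¹ i i * |K|, fun X hX hK => psd_entry_bound hX fun i => ?_⟩
  have h := key_ineq hR hS.posSemidef hX one_pos
    (by rw [one_smul]; exact Matrix.nonsing_inv_mul _ ((Matrix.isUnit_iff_isUnit_det _).1 hS.isUnit))
    (Pi.single i 1)
  simp at h
  have h0 : ∀ i, 0 ≤ S₀⁻¹ i i := fun i => hR.diag_nonneg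
  calc X i i ≤ S₀⁻¹ i i * (X * S₀).trace := h
    _ ≤ S₀⁻¹ i i * |K| := mul_le_mul_of_nonneg_left (hK.trans (le_abs_self K)) (h0 i)
    _ ≤ _ := Finset.single_le_sum (f := fun i => S₀⁻¹ i i * |K|)
        (fun i _ => mul_nonneg (h0 i) (abs_nonneg K)) (Finset.mem_univ i)

lemma mat_subseq {n : ℕ} (X : ℕ → Matrix (Fin n) (Fin n) ℝ) (L : ℝ)
    (h : ∀ k i j, |X k i j| ≤ L) :
    ∃ Xh, ∃ σ : ℕ → ℕ, StrictMono σ ∧ Tendsto (X ∘ σ) atTop (𝓝 Xh) := by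
  have hc : IsCompact (Set.pi Set.univ fun _ : Fin n => Set.pi Set.univ fun _ : Fin n =>
      Set.Icc (-L) L) := isCompact_univ_pi fun _ => isCompact_univ_pi fun _ => isCompact_Icc
  obtain ⟨a, -, σ, hσ, ht⟩ := IsCompact.tendsto_subseq (X := Fin n → Fin n → ℝ) hc (x := X)
    (fun k i _ j _ => abs_le.1 (h k i j))
  exact ⟨a, σ, hσ, ht⟩

lemma intrinsic_extend {V : Type*} [AddCommGroup V] [Module ℝ V] [TopologicalSpace V]
    [IsTopologicalAddGroup V] [ContinuousSMul ℝ V] {s : Set V} {x z : V}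
    (hx : x ∈ intrinsicInterior ℝ s) (hz : z ∈ s) :
    ∃ t : ℝ, 0 < t ∧ x + t • (x - z) ∈ s := by
  obtain ⟨y, hy, rfl⟩ := mem_intrinsicInterior.1 hx
  have hmem : ∀ t : ℝ, (y : V) + t • ((y : V) - z) ∈ affineSpan ℝ s := by
    intro t
    have := AffineMap.lineMap_mem (-t) y.2 (subset_affineSpan ℝ s hz)
    rw [AffineMap.lineMap_apply] at this
    convert this using 1
    simp only [vsub_eq_sub, vadd_eq_add, neg_smul, ← smul_neg, neg_sub]
    abel
  let f : ℝ → affineSpan ℝ s := fun t => ⟨_, hmem t⟩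
  have hf : Continuous f := by
    apply Continuous.subtype_mk
    fun_prop
  have h0 : f 0 = y := by ext; simp [f]
  have hn : ∀ᶠ t in 𝓝 (0 : ℝ), f t ∈ ((↑) ⁻¹' s : Set (affineSpan ℝ s)) := by
    apply hf.continuousAt.eventually
    rw [h0]
    exact mem_interior_iff_mem_nhds.1 hy
  obtain ⟨t, ht, ht0⟩ := ((hn.filter_mono nhdsWithin_le_nhds).and
    (self_mem_nhdsWithin (s := Set.Ioi (0:ℝ)))).exists
  exact ⟨t, ht0, ht⟩

lemma ker_le_of_extend {n : ℕ} {X Z : Matrix (Fin n) (Fin n) ℝ} (hZ : Z.PosSemidef) {t : ℝ}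
    (ht : 0 < t) (h : (X + t • (X - Z)).PosSemidef) (w : Fin n → ℝ) (hw : X *ᵥ w = 0) :
    Z *ᵥ w = 0 := by
  have h1 := psd_quad_nonneg h w
  have h2 := psd_quad_nonneg hZ w
  rw [add_mulVec, smul_mulVec, sub_mulVec, hw] at h1
  simp at h1
  have h3 : w ⬝ᵥ Z *ᵥ w = 0 := by nlinarith
  have := hZ.dotProduct_mulVec_zero_iff w
  simp only [star_trivial] at this
  exact this.1 h3

lemma specNorm_tendsto {n : ℕ} {M : ℕ → Matrix (Fin n) (Fin n) ℝ}
    (h : Tendsto M atTop (𝓝 0)) : Tendsto (fun k => specNorm (M k)) atTop (𝓝 0) := by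
  let F : Matrix (Fin n) (Fin n) ℝ →ₗ[ℝ] (EuclideanSpace ℝ (Fin n) →L[ℝ] EuclideanSpace ℝ (Fin n)) :=
    (LinearMap.toContinuousLinearMap (𝕜 := ℝ) (E := EuclideanSpace ℝ (Fin n))
      (F' := EuclideanSpace ℝ (Fin n))).toLinearMap ∘ₗ (Matrix.toEuclideanLin).toLinearMap
  have hF : Continuous F := F.continuous_of_finiteDimensional
  have := (hF.norm.tendsto 0).comp h
  simpa [F, Function.comp_def, specNorm] using this

lemma lower_set_fin {n r : ℕ} (hr : r ≤ n) (s : Finset (Fin n))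
    (hs : ∀ i j : Fin n, i ≤ j → j ∈ s → i ∈ s) (hc : s.card = r) (i : Fin n) :
    i ∈ s ↔ (i : ℕ) < r := by
  constructor
  · intro hi
    have h1 : Finset.Iic i ⊆ s := fun j hj => hs j i (Finset.mem_Iic.1 hj) hi
    have := Finset.card_le_card h1
    rw [Fin.card_Iic, hc] at this
    omega
  · intro hi
    by_contra hn
    have h1 : s ⊆ Finset.Iio i := by
      intro j hj
      rw [Finset.mem_Iio]
      by_contra hle
      exact hn (hs i j (not_lt.1 hle) hj)
    have := Finset.card_le_card h1
    rw [Fin.card_Iio, hc] at this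
    omega

lemma limit_static {n r : ℕ} (hr : r ≤ n) {Xs Xh : Matrix (Fin n) (Fin n) ℝ}
    (hXs : Xs.PosSemidef) (hXh : Xh.PosSemidef)
    (hk : ∀ w, Xs *ᵥ w = 0 ↔ Xh *ᵥ w = 0)
    (hrk : r = Module.finrank ℝ (LinearMap.range Xs.mulVecLin))
    (QB : Matrix (Fin n) (Fin r) ℝ) (hQB : QBᵀ * QB = 1)
    (hrange : LinearMap.range QB.mulVecLin = LinearMap.range Xs.mulVecLin)
    {φ : Fin n → ℝ} {Q : Matrix (Fin n) (Fin n) ℝ} (hφ : Antitone φ) (hQ : Qᵀ * Q = 1)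
    (hXQ : Xh * Q = Q * Matrix.diagonal φ) :
    (∀ i : Fin n, (i : ℕ) < r → 0 < φ i) ∧ (∀ i : Fin n, r ≤ (i : ℕ) → φ i = 0) ∧
    (Q.submatrix id (Fin.castLE hr)) * (Q.submatrix id (Fin.castLE hr))ᵀ = QB * QBᵀ := by
  have hQ' : Q * Qᵀ = 1 := mul_eq_one_comm.1 hQ
  have hdiag : Matrix.diagonal φ = Qᵀ * Xh * Q := by
    rw [Matrix.mul_assoc, hXQ, ← Matrix.mul_assoc, hQ, Matrix.one_mul]
  have hφ0 : ∀ i, 0 ≤ φ i := by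
    have h1 : (Matrix.diagonal φ).PosSemidef := by
      rw [hdiag]
      simpa using hXh.conjTranspose_mul_mul_same Q
    intro i
    simpa using h1.diag_nonneg (i := i)
  have hker : LinearMap.ker Xs.mulVecLin = LinearMap.ker Xh.mulVecLin := by
    ext w
    simp [hk w]
  have hrank : Xh.rank = r := by
    have h1 := LinearMap.finrank_range_add_finrank_ker Xs.mulVecLin
    have h2 := LinearMap.finrank_range_add_finrank_ker Xh.mulVecLin
    rw [hker] at h1
    unfold Matrix.rank
    omega
  have hunit : IsUnit Q.det := Matrix.isUnit_det_of_left_inverse hQ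
  have hunit' : IsUnit Qᵀ.det := by simpa using hunit
  have hcard : (Finset.univ.filter fun i => φ i ≠ 0).card = r := by
    have h1 : (Matrix.diagonal φ).rank = r := by
      rw [hdiag, Matrix.rank_mul_eq_left_of_isUnit_det _ _ hunit,
        Matrix.rank_mul_eq_right_of_isUnit_det _ _ hunit', hrank]
    rw [Matrix.rank_diagonal, Fintype.card_subtype] at h1
    exact h1
  have hset := lower_set_fin hr _ (by
    intro i j hij hj
    simp only [Finset.mem_filter, Finset.mem_univ, true_and] at hj ⊢
    have h1 : 0 < φ j := lt_of_le_of_ne (hφ0 j) (Ne.symm hj)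
    exact (h1.trans_le (hφ hij)).ne') hcard
  simp only [Finset.mem_filter, Finset.mem_univ, true_and] at hset
  have hz : ∀ i : Fin n, r ≤ (i : ℕ) → φ i = 0 := by
    intro i hi
    by_contra h
    have := (hset i).1 h
    omega
  refine ⟨fun i hi => lt_of_le_of_ne (hφ0 i) (Ne.symm ((hset i).2 hi)), hz, ?_⟩
  set Q₁ := Q.submatrix id (Fin.castLE hr) with hQ₁
  have hQ₁o : Q₁ᵀ * Q₁ = 1 := by
    ext a c
    have := congrFun (congrFun hQ (Fin.castLE hr a)) (Fin.castLE hr c)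
    simp only [Matrix.mul_apply, Matrix.transpose_apply, Matrix.one_apply] at this
    simp only [Matrix.mul_apply, Matrix.transpose_apply, Matrix.one_apply, hQ₁,
      Matrix.submatrix_apply, id]
    rw [this]
    simp [Fin.ext_iff]
  -- the columns of `Q` beyond `r` are orthogonal to the range of `QB`
  have hQQB : ∀ (j : Fin n) (c : Fin r), r ≤ (j : ℕ) → (Qᵀ * QB) j c = 0 := by
    intro j c hj
    have h1 : Xh *ᵥ (fun a => Q a j) = 0 := by
      ext a
      have := congrFun (congrFun hXQ a) j
      rw [Matrix.mul_diagonal, hz j hj, mul_zero] at this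
      simpa [Matrix.mul_apply, Matrix.mulVec, dotProduct] using this
    have h2 := (hk _).2 h1
    have h3 : QB *ᵥ (Pi.single c 1) ∈ LinearMap.range Xs.mulVecLin := by
      rw [← hrange]
      exact ⟨_, rfl⟩
    obtain ⟨u, hu⟩ := h3
    have h4 : (Qᵀ * QB) j c = (fun a => Q a j) ⬝ᵥ QB *ᵥ (Pi.single c 1) := by
      simp [Matrix.mul_apply, dotProduct]
    rw [h4, ← hu, Matrix.mulVecLin_apply, symm_swap (psd_symm hXs), h2, dotProduct_zero]
  have hP : Q₁ * Q₁ᵀ * QB = QB := by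
    have e : QB = Q * (Qᵀ * QB) := by rw [← Matrix.mul_assoc, hQ', Matrix.one_mul]
    have e1 : Q₁ᵀ * QB = (Qᵀ * QB).submatrix (Fin.castLE hr) id := by
      ext a c
      simp [Matrix.mul_apply, hQ₁]
    rw [Matrix.mul_assoc, e1]
    conv_rhs => rw [e]
    ext a c
    rw [Matrix.mul_apply, Matrix.mul_apply]
    simp only [hQ₁, Matrix.submatrix_apply, id]
    have hinj : Function.Injective (Fin.castLE hr) := Fin.castLE_injective hr
    rw [← Finset.sum_image (s := Finset.univ) (g := Fin.castLE hr)
      (f := fun j => Q a j * (Qᵀ * QB) j c) (fun x _ y _ h => hinj h)]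
    apply Finset.sum_subset (Finset.subset_univ _)
    intro j _ hj
    rw [hQQB j c, mul_zero]
    by_contra hlt
    exact hj (Finset.mem_image.2 ⟨⟨j, not_le.1 hlt⟩, Finset.mem_univ _, rfl⟩)
  set P := Q₁ * Q₁ᵀ with hPdef
  set R := QB * QBᵀ with hRdef
  have hPt : Pᵀ = P := by simp [hPdef]
  have hRt : Rᵀ = R := by simp [hRdef]
  have hPR : P * R = R := by rw [hRdef, ← Matrix.mul_assoc, hP]
  have hRP : R * P = R := by
    have := congrArg Matrix.transpose hPR
    rwa [Matrix.transpose_mul, hPt, hRt] at this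
  have hPP : P * P = P := by
    rw [hPdef, Matrix.mul_assoc, ← Matrix.mul_assoc Q₁ᵀ, hQ₁o, Matrix.one_mul]
  have hRR : R * R = R := by
    rw [hRdef, Matrix.mul_assoc, ← Matrix.mul_assoc QBᵀ, hQB, Matrix.one_mul]
  have htP : P.trace = r := by rw [hPdef, Matrix.trace_mul_comm, hQ₁o]; simp
  have htR : R.trace = r := by rw [hRdef, Matrix.trace_mul_comm, hQB]; simp
  have hfin : ((P - R)ᴴ * (P - R)).trace = 0 := by
    rw [Matrix.conjTranspose_eq_transpose_of_trivial, Matrix.transpose_sub, hPt, hRt,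
      Matrix.sub_mul, Matrix.mul_sub, Matrix.mul_sub, hPP, hPR, hRP, hRR]
    simp [htP, htR]
  exact sub_eq_zero.1 (Matrix.trace_conjTranspose_mul_self_eq_zero_iff.1 hfin)

lemma psd_of_tendsto {n : ℕ} {X : ℕ → Matrix (Fin n) (Fin n) ℝ}
    {Xh : Matrix (Fin n) (Fin n) ℝ} (hX : ∀ k, (X k).PosSemidef)
    (ht : Tendsto X atTop (𝓝 Xh)) : Xh.PosSemidef := by
  refine Matrix.PosSemidef.of_dotProduct_mulVec_nonneg ?_ ?_
  · have h1 : Tendsto (fun k => (X k)ᵀ) atTop (𝓝 Xhᵀ) :=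
      ((Continuous.matrix_transpose continuous_id).tendsto Xh).comp ht
    have h2 : (fun k => (X k)ᵀ) = X := funext fun k => psd_symm (hX k)
    rw [h2] at h1
    have := tendsto_nhds_unique h1 ht
    simpa [Matrix.IsHermitian] using this
  · intro w
    have hc : Continuous fun M : Matrix (Fin n) (Fin n) ℝ => w ⬝ᵥ M *ᵥ w := by fun_prop
    have := ge_of_tendsto' ((hc.tendsto Xh).comp ht) (fun k => psd_quad_nonneg (hX k) w)
    simpa using this

/-- The core subsequence argument, covering both the primal and the dual side. -/
lemma core_subseq {n r : ℕ} (hr : r ≤ n) {Xs : Matrix (Fin n) (Fin n) ℝ}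
    (hXs : Xs.PosSemidef)
    (hrk : r = Module.finrank ℝ (LinearMap.range Xs.mulVecLin))
    (QB : Matrix (Fin n) (Fin r) ℝ) (hQB : QBᵀ * QB = 1)
    (hrange : LinearMap.range QB.mulVecLin = LinearMap.range Xs.mulVecLin)
    (X S : ℕ → Matrix (Fin n) (Fin n) ℝ) (μ : ℕ → ℝ) (c L : ℝ)
    (hμ : ∀ k, 0 < μ k) (hX : ∀ k, (X k).PosSemidef) (hS : ∀ k, (S k).PosSemidef)
    (hXS : ∀ k, X k * S k = μ k • (1 : Matrix (Fin n) (Fin n) ℝ))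
    (hc : ∀ k, (Xs * S k).trace ≤ c * μ k) (hL : ∀ k i j, |X k i j| ≤ L)
    (hlim : ∀ (σ : ℕ → ℕ) (Xh : Matrix (Fin n) (Fin n) ℝ), StrictMono σ →
      Tendsto (X ∘ σ) atTop (𝓝 Xh) → ∀ w, Xs *ᵥ w = 0 → Xh *ᵥ w = 0)
    (φ : ℕ → Fin n → ℝ) (Q : ℕ → Matrix (Fin n) (Fin n) ℝ) (hφ : ∀ k, Antitone (φ k))
    (hQ : ∀ k, (Q k)ᵀ * Q k = 1) (hXQ : ∀ k, X k * Q k = Q k * Matrix.diagonal (φ k)) :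
    (∃ k, ∀ i j : Fin n, (i : ℕ) < r → r ≤ (j : ℕ) → φ k j < φ k i) ∧
    ∀ η : ℝ, 0 < η → ∃ k, specNorm (((Q k).submatrix id (Fin.castLE hr)) *
      ((Q k).submatrix id (Fin.castLE hr))ᵀ - QB * QBᵀ) < η := by
  obtain ⟨Xh, σ, hσ, hXt⟩ := mat_subseq X L hL
  have hQb : ∀ k i j, |Q k i j| ≤ 1 := by
    intro k i j
    have h1 := congrFun (congrFun (hQ k) j) j
    simp only [Matrix.mul_apply, Matrix.transpose_apply, Matrix.one_apply_eq] at h1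
    have h2 := Finset.single_le_sum (f := fun a => Q k a j * Q k a j)
      (fun a _ => mul_self_nonneg _) (Finset.mem_univ i)
    refine abs_le_of_sq_le_sq ?_ zero_le_one
    rw [h1] at h2
    nlinarith
  obtain ⟨Qh, τ, hτ, hQt⟩ := mat_subseq (Q ∘ σ) 1 (fun k => hQb (σ k))
  have hXt' : Tendsto (fun k => X (σ (τ k))) atTop (𝓝 Xh) := hXt.comp hτ.tendsto_atTop
  have hQt' : Tendsto (fun k => Q (σ (τ k))) atTop (𝓝 Qh) := hQt
  have hXh : Xh.PosSemidef := psd_of_tendsto (fun k => hX _) hXt'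
  set φh : Fin n → ℝ := fun i => (Qhᵀ * Xh * Qh) i i with hφh
  have hdiag : ∀ k, Matrix.diagonal (φ k) = (Q k)ᵀ * X k * Q k := by
    intro k
    rw [Matrix.mul_assoc, hXQ, ← Matrix.mul_assoc, hQ, Matrix.one_mul]
  have hφt : ∀ i, Tendsto (fun k => φ (σ (τ k)) i) atTop (𝓝 (φh i)) := by
    intro i
    have hcont : Continuous fun p : Matrix (Fin n) (Fin n) ℝ × Matrix (Fin n) (Fin n) ℝ =>
        (p.2ᵀ * p.1 * p.2) i i := by fun_prop
    have := (hcont.tendsto (Xh, Qh)).comp (hXt'.prodMk_nhds hQt')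
    refine this.congr fun k => ?_
    have := congrFun (congrFun (hdiag (σ (τ k))) i) i
    simp only [Matrix.diagonal_apply_eq] at this
    exact this.symm
  have hφt' : Tendsto (fun k => φ (σ (τ k))) atTop (𝓝 φh) := tendsto_pi_nhds.2 hφt
  have hφha : Antitone φh := fun i j hij =>
    le_of_tendsto_of_tendsto' (hφt j) (hφt i) (fun k => hφ _ hij)
  have hQh : Qhᵀ * Qh = 1 := by
    have hcont : Continuous fun p : Matrix (Fin n) (Fin n) ℝ => pᵀ * p := by fun_prop
    have := (hcont.tendsto Qh).comp hQt'
    exact tendsto_nhds_unique this (tendsto_const_nhds.congr fun k => (hQ _).symm)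
  have hXQh : Xh * Qh = Qh * Matrix.diagonal φh := by
    have hc1 : Continuous fun p : Matrix (Fin n) (Fin n) ℝ × Matrix (Fin n) (Fin n) ℝ =>
        p.1 * p.2 := by fun_prop
    have hc2 : Continuous fun p : Matrix (Fin n) (Fin n) ℝ × (Fin n → ℝ) =>
        p.1 * Matrix.diagonal p.2 := by fun_prop
    have h1 := (hc1.tendsto (Xh, Qh)).comp (hXt'.prodMk_nhds hQt')
    have h2 := (hc2.tendsto (Qh, φh)).comp (hQt'.prodMk_nhds hφt')
    exact tendsto_nhds_unique h1 (h2.congr fun k => (hXQ _).symm)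
  have hker : ∀ w, Xs *ᵥ w = 0 ↔ Xh *ᵥ w = 0 := by
    intro w
    refine ⟨hlim σ Xh hσ hXt w, fun hw => ?_⟩
    have h1 : ∀ k, w ⬝ᵥ Xs *ᵥ w ≤ c * (w ⬝ᵥ X k *ᵥ w) := by
      intro k
      have h2 := key_ineq (hX k) (hS k) hXs (hμ k) (hXS k) w
      have h3 := mul_le_mul_of_nonneg_left (hc k) (psd_quad_nonneg (hX k) w)
      have h4 : μ k * (w ⬝ᵥ Xs *ᵥ w) ≤ μ k * (c * (w ⬝ᵥ X k *ᵥ w)) := by nlinarith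
      exact le_of_mul_le_mul_left h4 (hμ k)
    have hcont : Continuous fun M : Matrix (Fin n) (Fin n) ℝ => c * (w ⬝ᵥ M *ᵥ w) := by fun_prop
    have h2 := ge_of_tendsto' ((hcont.tendsto Xh).comp hXt') (fun k => h1 _)
    rw [hw, dotProduct_zero, mul_zero] at h2
    have h3 := hXs.dotProduct_mulVec_zero_iff w
    simp only [star_trivial] at h3
    exact h3.1 (le_antisymm h2 (psd_quad_nonneg hXs w))
  obtain ⟨hpos, hzero, hproj⟩ :=
    limit_static hr hXs hXh hker hrk QB hQB hrange hφha hQh hXQh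
  constructor
  · have : ∀ᶠ k in atTop, ∀ i j : Fin n, (i : ℕ) < r → r ≤ (j : ℕ) →
        φ (σ (τ k)) j < φ (σ (τ k)) i := by
      rw [eventually_all]; intro i
      rw [eventually_all]; intro j
      by_cases hi : (i : ℕ) < r
      · by_cases hj : r ≤ (j : ℕ)
        · have : φh j < φh i := by rw [hzero j hj]; exact hpos i hi
          filter_upwards [(hφt j).eventually_lt (hφt i) this] with k hk _ _ using hk
        · exact Eventually.of_forall fun k _ h => absurd h hj
      · exact Eventually.of_forall fun k h => absurd h hi
    obtain ⟨k, hk⟩ := this.exists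
    exact ⟨_, hk⟩
  · intro η hη
    have hcont : Continuous fun M : Matrix (Fin n) (Fin n) ℝ =>
        (M.submatrix id (Fin.castLE hr)) * (M.submatrix id (Fin.castLE hr))ᵀ - QB * QBᵀ := by
      fun_prop
    have h1 := (hcont.tendsto Qh).comp hQt'
    rw [hproj, sub_self] at h1
    obtain ⟨k, hk⟩ := ((specNorm_tendsto h1).eventually_lt_const hη).exists
    exact ⟨_, hk⟩

lemma gap_eq {n m : ℕ} {C Cbar : Matrix (Fin n) (Fin n) ℝ}
    {A : Fin m → Matrix (Fin n) (Fin n) ℝ} {b : Fin m → ℝ}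
    {X S : Matrix (Fin n) (Fin n) ℝ} {y : Fin m → ℝ}
    (hX : PrimalFeasible A b X) (hS : DualFeasible C Cbar A 0 y S) :
    (X * S).trace = ((C + (0 : ℝ) • Cbar) * X).trace - ∑ i, b i * y i := by
  rw [← hS.2.1, Matrix.add_mul, Matrix.trace_add, Finset.sum_mul, Matrix.trace_sum,
    Matrix.trace_mul_comm X S]
  have : ∀ i, (y i • A i * X).trace = b i * y i := by
    intro i
    rw [Matrix.smul_mul, Matrix.trace_smul, hX.2.1 i, smul_eq_mul, mul_comm]
  simp only [this]
  ring

lemma central_trace {n m : ℕ} {C Cbar : Matrix (Fin n) (Fin n) ℝ}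
    {A : Fin m → Matrix (Fin n) (Fin n) ℝ} {b : Fin m → ℝ} {μ : ℝ}
    {X S : Matrix (Fin n) (Fin n) ℝ} {y : Fin m → ℝ}
    (h : CentralSol C Cbar A b 0 μ X y S) : (X * S).trace = n * μ := by
  rw [h.2.2]; simp [mul_comm]

lemma central_cross {n m : ℕ} {C Cbar : Matrix (Fin n) (Fin n) ℝ}
    {A : Fin m → Matrix (Fin n) (Fin n) ℝ} {b : Fin m → ℝ} {μ : ℝ}
    {X S X' S' : Matrix (Fin n) (Fin n) ℝ} {y y' : Fin m → ℝ}
    (h : CentralSol C Cbar A b 0 μ X y S) (hX' : PrimalFeasible A b X')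
    (hS' : DualFeasible C Cbar A 0 y' S') :
    (X' * S).trace + (X * S').trace = n * μ + (X' * S').trace := by
  rw [← central_trace h, gap_eq h.1 h.2.1, gap_eq hX' h.2.1, gap_eq h.1 hS', gap_eq hX' hS']
  ring

lemma central_opt_bounds {n m : ℕ} {C Cbar : Matrix (Fin n) (Fin n) ℝ}
    {A : Fin m → Matrix (Fin n) (Fin n) ℝ} {b : Fin m → ℝ} {μ : ℝ}
    {X S X' S' : Matrix (Fin n) (Fin n) ℝ} {y y' : Fin m → ℝ}
    (h : CentralSol C Cbar A b 0 μ X y S) (hX' : X' ∈ PrimalOpt C Cbar A b 0)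
    (hS' : (y', S') ∈ DualOpt C Cbar A b 0) :
    (X' * S).trace ≤ (2 * n) * μ ∧ (S' * X).trace ≤ (2 * n) * μ := by
  have h1 := central_cross h hX'.1 hS'.1
  have h2 : (X' * S').trace ≤ n * μ := by
    rw [← central_trace h, gap_eq h.1 h.2.1, gap_eq hX'.1 hS'.1]
    have := hX'.2 X h.1
    have := hS'.2 y S h.2.1
    simp only at *
    linarith
  have h3 := psd_trace_mul_nonneg hX'.1.2.2 h.2.1.2.2
  have h4 := psd_trace_mul_nonneg h.1.2.2 hS'.1.2.2
  rw [Matrix.trace_mul_comm S' X]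
  constructor <;> linarith

lemma seq_tendsto_zero {μ : ℕ → ℝ} (h0 : ∀ k, 0 < μ k) (h1 : ∀ k : ℕ, μ k < 1 / ((k : ℝ) + 1)) :
    Tendsto μ atTop (𝓝 0) :=
  squeeze_zero (fun k => (h0 k).le) (fun k => (h1 k).le) tendsto_one_div_add_atTop_nhds_zero_nat

lemma seq_le_one {μ : ℕ → ℝ} (h1 : ∀ k : ℕ, μ k < 1 / ((k : ℝ) + 1)) (k : ℕ) : μ k ≤ 1 := by
  refine (h1 k).le.trans ?_
  rw [div_le_one (by positivity)]
  have : (0 : ℝ) ≤ k := by positivity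
  linarith

lemma primal_seq {n m : ℕ} {C Cbar : Matrix (Fin n) (Fin n) ℝ}
    {A : Fin m → Matrix (Fin n) (Fin n) ℝ} {b : Fin m → ℝ}
    (hSA : StandingAssumptions C Cbar A b)
    {Xs Ss : Matrix (Fin n) (Fin n) ℝ} {ys : Fin m → ℝ}
    (hmc : MaxComp C Cbar A b 0 Xs ys Ss) {r : ℕ} (hr : r ≤ n)
    (hrk : r = Module.finrank ℝ (LinearMap.range Xs.mulVecLin))
    (QB : Matrix (Fin n) (Fin r) ℝ) (hQB : QBᵀ * QB = 1)
    (hrange : LinearMap.range QB.mulVecLin = LinearMap.range Xs.mulVecLin)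
    (μ : ℕ → ℝ) (hμ0 : ∀ k, 0 < μ k) (hμ1 : ∀ k : ℕ, μ k < 1 / ((k : ℝ) + 1))
    (X S : ℕ → Matrix (Fin n) (Fin n) ℝ) (y : ℕ → Fin m → ℝ)
    (hc : ∀ k, CentralSol C Cbar A b 0 (μ k) (X k) (y k) (S k))
    (φ : ℕ → Fin n → ℝ) (Q : ℕ → Matrix (Fin n) (Fin n) ℝ) (hφ : ∀ k, Antitone (φ k))
    (hQ : ∀ k, (Q k)ᵀ * Q k = 1) (hXQ : ∀ k, X k * Q k = Q k * Matrix.diagonal (φ k)) :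
    (∃ k, ∀ i j : Fin n, (i : ℕ) < r → r ≤ (j : ℕ) → φ k j < φ k i) ∧
    ∀ η : ℝ, 0 < η → ∃ k, specNorm (((Q k).submatrix id (Fin.castLE hr)) *
      ((Q k).submatrix id (Fin.castLE hr))ᵀ - QB * QBᵀ) < η := by
  obtain ⟨-, -, -, -, X₀, y₀, S₀, hX₀, -, hS₀, hS₀p⟩ := hSA
  have hXo := intrinsicInterior_subset hmc.1
  have hSo := intrinsicInterior_subset hmc.2
  obtain ⟨L, hL⟩ := psd_bounded hS₀p (n + (X₀ * S₀).trace)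
  refine core_subseq hr hXo.1.2.2 hrk QB hQB hrange X S μ (2 * n) L hμ0
    (fun k => (hc k).1.2.2) (fun k => (hc k).2.1.2.2) (fun k => (hc k).2.2)
    (fun k => (central_opt_bounds (hc k) hXo hSo).1) (fun k => hL _ (hc k).1.2.2 ?_)
    ?_ φ Q hφ hQ hXQ
  · have h1 := central_cross (hc k) hX₀ hS₀
    have h2 := psd_trace_mul_nonneg hX₀.2.2 (hc k).2.1.2.2
    have h3 : (n : ℝ) * μ k ≤ n := mul_le_of_le_one_right (by positivity) (seq_le_one hμ1 k)
    linarith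
  · intro σ Xh hσ ht w hw
    have hpsd : Xh.PosSemidef := psd_of_tendsto (fun k => (hc _).1.2.2) ht
    have hfeas : PrimalFeasible A b Xh := by
      refine ⟨psd_symm hpsd, fun i => ?_, hpsd⟩
      have hcont : Continuous fun M : Matrix (Fin n) (Fin n) ℝ => (A i * M).trace := by fun_prop
      exact tendsto_nhds_unique ((hcont.tendsto Xh).comp ht)
        (tendsto_const_nhds.congr fun k => ((hc (σ k)).1.2.1 i).symm)
    have hopt : Xh ∈ PrimalOpt C Cbar A b 0 := by
      refine ⟨hfeas, fun X' hX' => ?_⟩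
      have hcont : Continuous fun M : Matrix (Fin n) (Fin n) ℝ =>
        ((C + (0 : ℝ) • Cbar) * M).trace := by fun_prop
      have hμt : Tendsto (fun k => ((C + (0 : ℝ) • Cbar) * X').trace + n * μ (σ k)) atTop
          (𝓝 (((C + (0 : ℝ) • Cbar) * X').trace + n * 0)) :=
        (((seq_tendsto_zero hμ0 hμ1).comp hσ.tendsto_atTop).const_mul _).const_add _
      rw [mul_zero, add_zero] at hμt
      refine le_of_tendsto_of_tendsto' ((hcont.tendsto Xh).comp ht) hμt fun k => ?_
      have h1 := gap_eq (hc (σ k)).1 (hc (σ k)).2.1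
      have h2 := gap_eq hX' (hc (σ k)).2.1
      have h3 := psd_trace_mul_nonneg hX'.2.2 (hc (σ k)).2.1.2.2
      have h4 := central_trace (hc (σ k))
      simp only [Function.comp_apply]
      linarith
    obtain ⟨t, ht0, hmem⟩ := intrinsic_extend hmc.1 hopt
    exact ker_le_of_extend hpsd ht0 hmem.1.2.2 w hw

lemma dual_seq {n m : ℕ} {C Cbar : Matrix (Fin n) (Fin n) ℝ}
    {A : Fin m → Matrix (Fin n) (Fin n) ℝ} {b : Fin m → ℝ}
    (hSA : StandingAssumptions C Cbar A b)
    {Xs Ss : Matrix (Fin n) (Fin n) ℝ} {ys : Fin m → ℝ}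
    (hmc : MaxComp C Cbar A b 0 Xs ys Ss) {r : ℕ} (hr : r ≤ n)
    (hrk : r = Module.finrank ℝ (LinearMap.range Ss.mulVecLin))
    (QN : Matrix (Fin n) (Fin r) ℝ) (hQN : QNᵀ * QN = 1)
    (hrange : LinearMap.range QN.mulVecLin = LinearMap.range Ss.mulVecLin)
    (μ : ℕ → ℝ) (hμ0 : ∀ k, 0 < μ k) (hμ1 : ∀ k : ℕ, μ k < 1 / ((k : ℝ) + 1))
    (X S : ℕ → Matrix (Fin n) (Fin n) ℝ) (y : ℕ → Fin m → ℝ)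
    (hc : ∀ k, CentralSol C Cbar A b 0 (μ k) (X k) (y k) (S k))
    (φ : ℕ → Fin n → ℝ) (Q : ℕ → Matrix (Fin n) (Fin n) ℝ) (hφ : ∀ k, Antitone (φ k))
    (hQ : ∀ k, (Q k)ᵀ * Q k = 1) (hSQ : ∀ k, S k * Q k = Q k * Matrix.diagonal (φ k)) :
    (∃ k, ∀ i j : Fin n, (i : ℕ) < r → r ≤ (j : ℕ) → φ k j < φ k i) ∧
    ∀ η : ℝ, 0 < η → ∃ k, specNorm (((Q k).submatrix id (Fin.castLE hr)) *
      ((Q k).submatrix id (Fin.castLE hr))ᵀ - QN * QNᵀ) < η := by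
  obtain ⟨-, -, -, hli, X₀, y₀, S₀, hX₀, hX₀p, hS₀, -⟩ := hSA
  have hXo := intrinsicInterior_subset hmc.1
  have hSo := intrinsicInterior_subset hmc.2
  obtain ⟨L, hL⟩ := psd_bounded hX₀p (n + (X₀ * S₀).trace)
  refine core_subseq hr hSo.1.2.2 hrk QN hQN hrange S X μ (2 * n) L hμ0
    (fun k => (hc k).2.1.2.2) (fun k => (hc k).1.2.2) (fun k => ?_)
    (fun k => (central_opt_bounds (hc k) hXo hSo).2) (fun k => hL _ (hc k).2.1.2.2 ?_)
    ?_ φ Q hφ hQ hSQ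
  · have := congrArg Matrix.transpose (hc k).2.2
    rw [Matrix.transpose_mul, psd_symm (hc k).1.2.2, psd_symm (hc k).2.1.2.2] at this
    simpa using this
  · have h1 := central_cross (hc k) hX₀ hS₀
    have h2 := psd_trace_mul_nonneg (hc k).1.2.2 hS₀.2.2
    have h3 : (n : ℝ) * μ k ≤ n := mul_le_of_le_one_right (by positivity) (seq_le_one hμ1 k)
    rw [Matrix.trace_mul_comm]
    linarith
  · intro σ Sh hσ ht w hw
    have hpsd : Sh.PosSemidef := psd_of_tendsto (fun k => (hc _).2.1.2.2) ht
    let F : (Fin m → ℝ) →ₗ[ℝ] Matrix (Fin n) (Fin n) ℝ := Fintype.linearCombination ℝ A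
    have hFapp : ∀ v, F v = ∑ i, v i • A i := fun v => Fintype.linearCombination_apply ℝ A v
    have hFinj : LinearMap.ker F = ⊥ :=
      LinearMap.ker_eq_bot.2 hli.fintypeLinearCombination_injective
    obtain ⟨G, hG⟩ := F.exists_leftInverse_of_injective hFinj
    have hGF : ∀ v, G (F v) = v := fun v => LinearMap.congr_fun hG v
    have hGc : Continuous G := G.continuous_of_finiteDimensional
    have hFc : Continuous F := F.continuous_of_finiteDimensional
    have hyk : ∀ k, y k = G (C + (0 : ℝ) • Cbar - S k) := by
      intro k
      rw [← (hc k).2.1.2.1, add_sub_cancel_right, ← hFapp, hGF]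
    have hyt : Tendsto (fun k => y (σ k)) atTop (𝓝 (G (C + (0 : ℝ) • Cbar - Sh))) := by
      have hcont : Continuous fun M : Matrix (Fin n) (Fin n) ℝ => G (C + (0 : ℝ) • Cbar - M) := by
        fun_prop
      exact ((hcont.tendsto Sh).comp ht).congr fun k => (hyk _).symm
    set yh := G (C + (0 : ℝ) • Cbar - Sh)
    have hfeas : DualFeasible C Cbar A 0 yh Sh := by
      refine ⟨psd_symm hpsd, ?_, hpsd⟩
      rw [← hFapp]
      have h1 := ((hFc.tendsto yh).comp hyt).add ht
      refine tendsto_nhds_unique h1 (tendsto_const_nhds.congr fun k => ?_)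
      simp only [Function.comp_apply, hFapp]
      exact (hc (σ k)).2.1.2.1.symm
    have hopt : (yh, Sh) ∈ DualOpt C Cbar A b 0 := by
      refine ⟨hfeas, fun y' S' hS' => ?_⟩
      have hcont : Continuous fun v : Fin m → ℝ => ∑ i, b i * v i := by fun_prop
      have hμt : Tendsto (fun k => (∑ i, b i * y' i) - n * μ (σ k)) atTop
          (𝓝 ((∑ i, b i * y' i) - n * 0)) :=
        (((seq_tendsto_zero hμ0 hμ1).comp hσ.tendsto_atTop).const_mul _).const_sub _
      rw [mul_zero, sub_zero] at hμt
      refine le_of_tendsto_of_tendsto' hμt ((hcont.tendsto yh).comp hyt) fun k => ?_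
      have h1 := gap_eq (hc (σ k)).1 (hc (σ k)).2.1
      have h2 := gap_eq (hc (σ k)).1 hS'
      have h3 := psd_trace_mul_nonneg (hc (σ k)).1.2.2 hS'.2.2
      have h4 := central_trace (hc (σ k))
      simp only [Function.comp_apply]
      linarith
    obtain ⟨t, ht0, hmem⟩ := intrinsic_extend hmc.2 hopt
    exact ker_le_of_extend hpsd ht0 hmem.1.2.2 w hw

end Helpers

/-- for small `μ` the dominant eigenvalue gaps of the central solutions are
positive, and the corresponding eigenspaces converge to `B` and `N` as `μ → 0⁺`. -/
theorem stmt17 {n m : ℕ} (C Cbar : Matrix (Fin n) (Fin n) ℝ)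
    (A : Fin m → Matrix (Fin n) (Fin n) ℝ) (b : Fin m → ℝ)
    (hSA : StandingAssumptions C Cbar A b)
    (Xs Ss : Matrix (Fin n) (Fin n) ℝ) (ys : Fin m → ℝ)
    (hmc : MaxComp C Cbar A b 0 Xs ys Ss)
    (nB nN : ℕ) (hnBle : nB ≤ n) (hnNle : nN ≤ n)
    (hnB : nB = Module.finrank ℝ (LinearMap.range Xs.mulVecLin))
    (hnN : nN = Module.finrank ℝ (LinearMap.range Ss.mulVecLin))
    (QB : Matrix (Fin n) (Fin nB) ℝ) (QN : Matrix (Fin n) (Fin nN) ℝ)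
    (hQBorth : QBᵀ * QB = 1)
    (hQBrange : LinearMap.range QB.mulVecLin = LinearMap.range Xs.mulVecLin)
    (hQNorth : QNᵀ * QN = 1)
    (hQNrange : LinearMap.range QN.mulVecLin = LinearMap.range Ss.mulVecLin) :
    (1 ≤ nB →
      (∃ μt : ℝ, 0 < μt ∧
        ∀ μ : ℝ, 0 < μ → μ < μt →
          ∀ (Xμ Sμ : Matrix (Fin n) (Fin n) ℝ) (yμ : Fin m → ℝ),
            CentralSol C Cbar A b 0 μ Xμ yμ Sμ →
            ∀ (φ : Fin n → ℝ) (QX : Matrix (Fin n) (Fin n) ℝ), Antitone φ →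
              QXᵀ * QX = 1 → Xμ * QX = QX * Matrix.diagonal φ →
              ∀ i j : Fin n, (i : ℕ) < nB → nB ≤ (j : ℕ) → φ j < φ i) ∧
      (∀ η : ℝ, 0 < η → ∃ μ₀ : ℝ, 0 < μ₀ ∧
        ∀ μ : ℝ, 0 < μ → μ < μ₀ →
          ∀ (Xμ Sμ : Matrix (Fin n) (Fin n) ℝ) (yμ : Fin m → ℝ),
            CentralSol C Cbar A b 0 μ Xμ yμ Sμ →
            ∀ (φ : Fin n → ℝ) (QX : Matrix (Fin n) (Fin n) ℝ), Antitone φ →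
              QXᵀ * QX = 1 → Xμ * QX = QX * Matrix.diagonal φ →
              specNorm ((QX.submatrix id (Fin.castLE hnBle)) *
                  (QX.submatrix id (Fin.castLE hnBle))ᵀ - QB * QBᵀ) < η)) ∧
    (1 ≤ nN →
      (∃ μt : ℝ, 0 < μt ∧
        ∀ μ : ℝ, 0 < μ → μ < μt →
          ∀ (Xμ Sμ : Matrix (Fin n) (Fin n) ℝ) (yμ : Fin m → ℝ),
            CentralSol C Cbar A b 0 μ Xμ yμ Sμ →
            ∀ (ψ : Fin n → ℝ) (QS : Matrix (Fin n) (Fin n) ℝ), Antitone ψ →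
              QSᵀ * QS = 1 → Sμ * QS = QS * Matrix.diagonal ψ →
              ∀ i j : Fin n, (i : ℕ) < nN → nN ≤ (j : ℕ) → ψ j < ψ i) ∧
      (∀ η : ℝ, 0 < η → ∃ μ₀ : ℝ, 0 < μ₀ ∧
        ∀ μ : ℝ, 0 < μ → μ < μ₀ →
          ∀ (Xμ Sμ : Matrix (Fin n) (Fin n) ℝ) (yμ : Fin m → ℝ),
            CentralSol C Cbar A b 0 μ Xμ yμ Sμ →
            ∀ (ψ : Fin n → ℝ) (QS : Matrix (Fin n) (Fin n) ℝ), Antitone ψ →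
              QSᵀ * QS = 1 → Sμ * QS = QS * Matrix.diagonal ψ →
              specNorm ((QS.submatrix id (Fin.castLE hnNle)) *
                  (QS.submatrix id (Fin.castLE hnNle))ᵀ - QN * QNᵀ) < η)) := by
  refine ⟨fun _ => ⟨?_, ?_⟩, fun _ => ⟨?_, ?_⟩⟩
  · by_contra! h
    choose μ hμ0 hμ1 X S y hc φ Q hφ hQ hXQ i j hi hj hbad using
      fun k : ℕ => h (1 / ((k : ℝ) + 1)) (by positivity)
    obtain ⟨k, hk⟩ := (primal_seq hSA hmc hnBle hnB QB hQBorth hQBrange μ hμ0 hμ1 X S y hc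
      φ Q hφ hQ hXQ).1
    exact absurd (hk (i k) (j k) (hi k) (hj k)) (not_lt.2 (hbad k))
  · intro η hη
    by_contra! h
    choose μ hμ0 hμ1 X S y hc φ Q hφ hQ hXQ hbad using
      fun k : ℕ => h (1 / ((k : ℝ) + 1)) (by positivity)
    obtain ⟨k, hk⟩ := (primal_seq hSA hmc hnBle hnB QB hQBorth hQBrange μ hμ0 hμ1 X S y hc
      φ Q hφ hQ hXQ).2 η hη
    exact absurd hk (not_lt.2 (hbad k))
  · by_contra! h
    choose μ hμ0 hμ1 X S y hc φ Q hφ hQ hXQ i j hi hj hbad using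
      fun k : ℕ => h (1 / ((k : ℝ) + 1)) (by positivity)
    obtain ⟨k, hk⟩ := (dual_seq hSA hmc hnNle hnN QN hQNorth hQNrange μ hμ0 hμ1 X S y hc
      φ Q hφ hQ hXQ).1
    exact absurd (hk (i k) (j k) (hi k) (hj k)) (not_lt.2 (hbad k))
  · intro η hη
    by_contra! h
    choose μ hμ0 hμ1 X S y hc φ Q hφ hQ hXQ hbad using
      fun k : ℕ => h (1 / ((k : ℝ) + 1)) (by positivity)
    obtain ⟨k, hk⟩ := (dual_seq hSA hmc hnNle hnN QN hQNorth hQNrange μ hμ0 hμ1 X S y hc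
      φ Q hφ hQ hXQ).2 η hη
    exact absurd hk (not_lt.2 (hbad k))
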